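/- If Xᵀc ≠ 0, where c = 2y − 1, then there exists a vector z̄ ∈ S such that ℓ(z̄) < ℓ(0). -/

import Mathlib

/-!
The gradient of the logistic loss at the origin is `-(1 / (2n)) Xᵀc`, because the sigmoid takes the
value `1 / 2` there. If it is nonzero, then some coordinate of it is nonzero, and moving from the
origin along that single coordinate axis already decreases the loss.
-/

open scoped RealInnerProductSpace BigOperators
open Matrix

/-- The number of nonzero entries of a vector (the ℓ₀ "norm"). -/
noncomputable def norm0 {p : ℕ} (z : EuclideanSpace ℝ (Fin p)) : ℕ :=
  {i | z i ≠ 0}.ncard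

theorem norm0_single_le_one {p : ℕ} (j : Fin p) (t : ℝ) :
    norm0 (EuclideanSpace.single j t) ≤ 1 := by
  have support_subset : {i | EuclideanSpace.single j t i ≠ 0} ⊆ {j} :=
    fun i hi => by_contra fun hij : i ≠ j => hi (by simp [hij])
  simpa [norm0] using Set.ncard_le_ncard support_subset

section Descent

theorem exists_apply_add_smul_lt_of_hasLineDerivAt {E : Type*} [AddCommGroup E] [Module ℝ E]
    {f : E → ℝ} {f' : ℝ} {x v : E} (hf : HasLineDerivAt ℝ f f' x v) (hf' : f' ≠ 0) :
    ∃ t : ℝ, f (x + t • v) < f x := by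
  by_contra! hmin
  have hlocal : IsLocalMin (fun t : ℝ => f (x + t • v)) 0 :=
    .of_forall fun t => by simpa using hmin t
  exact hf' (hlocal.hasDerivAt_eq_zero hf)

theorem exists_apply_add_single_lt_of_hasGradientAt {κ : Type*} [Fintype κ] [DecidableEq κ]
    {f : EuclideanSpace ℝ κ → ℝ} {g x : EuclideanSpace ℝ κ}
    (hf : HasGradientAt f g x) (hg : g ≠ 0) :
    ∃ (j : κ) (t : ℝ), f (x + EuclideanSpace.single j t) < f x := by
  obtain ⟨j, hj⟩ : ∃ j, g j ≠ 0 := by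
    by_contra! h
    exact hg (PiLp.ext h)
  have hline : HasLineDerivAt ℝ f (g j) x (EuclideanSpace.single j 1) := by
    simpa [EuclideanSpace.inner_single_right] using
      hf.hasFDerivAt.hasLineDerivAt (EuclideanSpace.single j 1)
  obtain ⟨t, ht⟩ := exists_apply_add_smul_lt_of_hasLineDerivAt hline hj
  have hsmul : t • EuclideanSpace.single j (1 : ℝ) = EuclideanSpace.single j t := by
    ext i
    simp
  exact ⟨j, t, hsmul ▸ ht⟩

end Descent

section LogisticLoss

variable {ι E : Type*} [Fintype ι] [NormedAddCommGroup E] [InnerProductSpace ℝ E]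

/-- The average logistic loss of the parameter `z` on the samples `x i` with labels `y i`.
The labels are arbitrary reals, so that soft labels are covered. -/
noncomputable def logisticLoss (x : ι → E) (y : ι → ℝ) (z : E) : ℝ :=
  (1 / (Fintype.card ι : ℝ)) * ∑ i, (Real.log (1 + Real.exp ⟪x i, z⟫) - y i * ⟪x i, z⟫)

theorem hasDerivAt_log_one_add_exp (t : ℝ) :
    HasDerivAt (fun t => Real.log (1 + Real.exp t)) (Real.sigmoid t) t := by
  have hne : 1 + Real.exp t ≠ 0 := by positivity
  refine (((Real.hasDerivAt_exp t).const_add 1).log hne).congr_deriv ?_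
  rw [Real.sigmoid_def, Real.exp_neg]
  field_simp
  ring

theorem hasGradientAt_logisticLoss [CompleteSpace E] (x : ι → E) (y : ι → ℝ) (z : E) :
    HasGradientAt (logisticLoss x y)
      ((1 / (Fintype.card ι : ℝ)) • ∑ i, (Real.sigmoid ⟪x i, z⟫ - y i) • x i) z := by
  have hsummand (i : ι) :
      HasFDerivAt (fun z => Real.log (1 + Real.exp ⟪x i, z⟫) - y i * ⟪x i, z⟫)
        ((Real.sigmoid ⟪x i, z⟫ - y i) • innerSL ℝ (x i)) z := by
    have hinner : HasFDerivAt (fun z => ⟪x i, z⟫) (innerSL ℝ (x i)) z :=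
      (innerSL ℝ (x i)).hasFDerivAt
    rw [sub_smul]
    exact ((hasDerivAt_log_one_add_exp _).comp_hasFDerivAt z hinner).sub (hinner.const_mul (y i))
  rw [hasGradientAt_iff_hasFDerivAt]
  refine ((HasFDerivAt.fun_sum fun i _ => hsummand i).const_mul _).congr_fderiv ?_
  ext v
  simp

theorem hasGradientAt_logisticLoss_zero [CompleteSpace E] (x : ι → E) (y : ι → ℝ) :
    HasGradientAt (logisticLoss x y)
      (-(1 / (2 * Fintype.card ι : ℝ)) • ∑ i, (2 * y i - 1) • x i) 0 := by
  convert hasGradientAt_logisticLoss x y 0 using 1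
  simp only [inner_zero_right, Real.sigmoid_zero, Finset.smul_sum, smul_smul]
  refine Finset.sum_congr rfl fun i _ => ?_
  congr 1
  ring

end LogisticLoss

section DesignMatrix

variable {ι κ : Type*} [Fintype ι]

theorem logisticLoss_toLp_row [Fintype κ] (X : Matrix ι κ ℝ) (y : ι → ℝ)
    (z : EuclideanSpace ℝ κ) :
    logisticLoss (fun i => WithLp.toLp 2 (X i)) y z = (1 / (Fintype.card ι : ℝ)) *
      ∑ i, (Real.log (1 + Real.exp (∑ j, X i j * z j)) - y i * ∑ j, X i j * z j) := by
  simp [logisticLoss, PiLp.inner_apply, mul_comm]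

theorem sum_smul_toLp_row (X : Matrix ι κ ℝ) (c : ι → ℝ) :
    ∑ i, c i • WithLp.toLp 2 (X i) = WithLp.toLp 2 (Xᵀ *ᵥ c) := by
  simp [mulVec_transpose, vecMul_eq_sum, WithLp.toLp_sum]

end DesignMatrix

theorem exists_sparse_better_than_zero_general {ι : Type*} [Fintype ι] {p : ℕ}
    (x : ι → EuclideanSpace ℝ (Fin p)) (y : ι → ℝ) (hxy : ∑ i, (2 * y i - 1) • x i ≠ 0) :
    ∃ z, norm0 z ≤ 1 ∧ logisticLoss x y z < logisticLoss x y 0 := by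
  have : Nonempty ι := by
    by_contra! h
    exact hxy (by simp)
  have hgrad : -(1 / (2 * Fintype.card ι : ℝ)) • ∑ i, (2 * y i - 1) • x i ≠ 0 :=
    smul_ne_zero (by simp) hxy
  obtain ⟨j, t, ht⟩ :=
    exists_apply_add_single_lt_of_hasGradientAt (hasGradientAt_logisticLoss_zero x y) hgrad
  exact ⟨EuclideanSpace.single j t, norm0_single_le_one j t, by simpa using ht⟩

/-- If `Xᵀc ≠ 0` with `c = 2y − 1`, then there exists `z̄ ∈ S`
with `ℓ(z̄) < ℓ(0)`. -/
theorem exists_sparse_better_than_zero (n p s : ℕ) (hn : 0 < n) (hs : 0 < s) (hsp : s < p)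
    (X : Matrix (Fin n) (Fin p) ℝ) (y : Fin n → ℝ)
    (hy : ∀ i, y i = 0 ∨ y i = 1)
    (ℓ : EuclideanSpace ℝ (Fin p) → ℝ)
    (hℓ : ∀ z, ℓ z = (1 / (n : ℝ)) *
      ∑ i, (Real.log (1 + Real.exp (∑ j, X i j * z j)) - y i * (∑ j, X i j * z j)))
    (c : Fin n → ℝ) (hc : ∀ i, c i = 2 * y i - 1)
    (hXc : Xᵀ.mulVec c ≠ 0) :
    ∃ zbar : EuclideanSpace ℝ (Fin p), norm0 zbar ≤ s ∧ ℓ zbar < ℓ 0 := by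
  obtain rfl : ℓ = logisticLoss (fun i => WithLp.toLp 2 (X i)) y :=
    funext fun z => by rw [hℓ, logisticLoss_toLp_row, Fintype.card_fin]
  obtain ⟨z, hz, hlt⟩ := exists_sparse_better_than_zero_general (fun i => WithLp.toLp 2 (X i)) y
    (by simpa only [← hc, sum_smul_toLp_row, ne_eq, WithLp.toLp_eq_zero] using hXc)
  exact ⟨z, hz.trans hs, hlt⟩
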